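/- arXiv:math/0201154 — 2 statements merged into one kernel-verified Lean document; each statement's English description precedes it below -/
import Mathlib

section
/- Let a, b, e be nonnegative integers, m a positive integer, and c_1, d_1, c_2 ∈ ℚ_2. If the polynomial f(x) = c_2·x^a·(c_1·x^b + d_1·x^e)^m is not identically zero, then f has at most 3 distinct roots in ℚ_2. -/
open Polynomial

/-!
The ratio `x / y` of two nonzero roots of a nonzero binomial `c X ^ b + d X ^ e` satisfies
`(x / y) ^ b = (x / y) ^ e` with `b ≠ e`, so it is a root of unity. Hence over any field the
number of nonzero roots is at most the number of roots of unity, and `ℚ_[2]` has only two of them: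
a root of unity of odd order is `1` because it is `1` modulo `2` and `X ^ m - 1` is separable
modulo `2` for odd `m`, and there are none of order `4` because `-1` is not a square modulo `4`.
-/

theorem isOfFinOrder_of_pow_eq_pow {M₀ : Type*} [MonoidWithZero M₀]
    [IsLeftCancelMulZero M₀] {x : M₀} (hx : x ≠ 0) {b e : ℕ} (hbe : b ≠ e)
    (h : x ^ b = x ^ e) : IsOfFinOrder x := by
  wlog hlt : b < e generalizing b e
  · exact this hbe.symm h.symm (hbe.lt_or_gt.resolve_left hlt)
  refine isOfFinOrder_iff_pow_eq_one.mpr ⟨e - b, Nat.sub_pos_of_lt hlt, ?_⟩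
  apply mul_left_cancel₀ (pow_ne_zero b hx)
  rw [pow_mul_pow_sub x hlt.le, mul_one, h]

theorem isOfFinOrder_div_of_isRoot_binomial {K : Type*} [Field K] {b e : ℕ} {c d x y : K}
    (hg : C c * X ^ b + C d * X ^ e ≠ 0) (hx : x ≠ 0) (hy : y ≠ 0)
    (hgx : IsRoot (C c * X ^ b + C d * X ^ e) x) (hgy : IsRoot (C c * X ^ b + C d * X ^ e) y) :
    IsOfFinOrder (x / y) := by
  simp only [IsRoot.def, eval_add, eval_mul, eval_C, eval_pow, eval_X] at hgx hgy
  have hc : c ≠ 0 := by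
    rintro rfl
    have hd : d = 0 := by simpa [hx] using hgx
    simp [hd] at hg
  have hbe : b ≠ e := by
    rintro rfl
    have hcd : c + d = 0 := by simpa [← add_mul, hx] using hgx
    simp [← add_mul, ← C_add, hcd] at hg
  refine isOfFinOrder_of_pow_eq_pow (div_ne_zero hx hy) hbe ?_
  rw [div_pow, div_pow, div_eq_div_iff (pow_ne_zero b hy) (pow_ne_zero e hy)]
  apply mul_left_cancel₀ hc
  linear_combination y ^ e * hgx - x ^ e * hgy

theorem encard_le_encard_add_one_of_div_mem {G₀ : Type*} [GroupWithZero G₀] {S T : Set G₀}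
    (h : ∀ x ∈ S, ∀ y ∈ S, x ≠ 0 → y ≠ 0 → x / y ∈ T) : S.encard ≤ T.encard + 1 := by
  by_cases hS : S ⊆ {0}
  · calc S.encard ≤ ({0} : Set G₀).encard := Set.encard_le_encard hS
      _ = 1 := Set.encard_singleton 0
      _ ≤ T.encard + 1 := le_add_self
  · obtain ⟨y, hyS, hy⟩ := Set.not_subset.mp hS
    have hsub : S ⊆ insert 0 ((· * y) '' T) := fun x hxS ↦ by
      rcases eq_or_ne x 0 with rfl | hx
      · exact Set.mem_insert 0 _
      · exact Or.inr ⟨x / y, h x hxS y hyS hx hy, div_mul_cancel₀ x hy⟩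
    calc S.encard ≤ (insert 0 ((· * y) '' T)).encard := Set.encard_le_encard hsub
      _ ≤ ((· * y) '' T).encard + 1 := Set.encard_insert_le _ 0
      _ ≤ T.encard + 1 := add_le_add_left (Set.encard_image_le _ T) 1

theorem eq_one_of_pow_eq_one_of_map_eq_one {R S : Type*} [Ring R] [NoZeroDivisors R]
    [Semiring S] (φ : R →+* S) {u : R} {n : ℕ} (hn : (n : S) ≠ 0) (hφ : φ u = 1) (h : u ^ n = 1) :
    u = 1 := by
  have hprod : (u - 1) * ∑ i ∈ Finset.range n, u ^ i = 0 := by rw [mul_geom_sum, h, sub_self]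
  have hsum : φ (∑ i ∈ Finset.range n, u ^ i) = n := by
    simp only [map_sum, map_pow, hφ, one_geom_sum]
  refine sub_eq_zero.mp ((mul_eq_zero.mp hprod).resolve_right fun h0 ↦ hn ?_)
  rw [← hsum, h0, map_zero]

theorem eq_one_or_eq_neg_one_of_pow_two_pow_eq_one {R : Type*} [Ring R] [NoZeroDivisors R]
    (hneg : ¬IsSquare (-1 : R)) {u : R} {k : ℕ} (h : u ^ 2 ^ k = 1) : u = 1 ∨ u = -1 := by
  induction k generalizing u with
  | zero => exact Or.inl (by simpa using h)
  | succ k ih =>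
    rw [pow_succ', pow_mul] at h
    rcases ih h with hsq | hsq
    · exact sq_eq_one_iff.mp hsq
    · exact absurd ⟨u, by rw [← hsq, sq]⟩ hneg

theorem not_isSquare_neg_one_padicInt_two : ¬IsSquare (-1 : ℤ_[2]) := fun h ↦ by
  have hmod : IsSquare (-1 : ZMod (2 ^ 2)) := by
    simpa only [map_neg, map_one] using h.map (PadicInt.toZModPow (p := 2) 2)
  revert hmod
  decide

theorem eq_one_or_eq_neg_one_of_isOfFinOrder_padicInt_two {u : ℤ_[2]} (hu : IsOfFinOrder u) :
    u = 1 ∨ u = -1 := by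
  obtain ⟨n, hn, hun⟩ := hu.exists_pow_eq_one
  obtain ⟨k, m, hm, rfl⟩ := Nat.exists_eq_two_pow_mul_odd hn.ne'
  rw [pow_mul] at hun
  have hmod : PadicInt.toZMod (u ^ 2 ^ k) = 1 :=
    isUnit_iff_eq_one.mp ((hu.isUnit.pow _).map PadicInt.toZMod)
  have hm_mod : (m : ZMod 2) ≠ 0 := ZMod.natCast_ne_zero_iff_odd.mpr hm
  exact eq_one_or_eq_neg_one_of_pow_two_pow_eq_one not_isSquare_neg_one_padicInt_two
    (eq_one_of_pow_eq_one_of_map_eq_one PadicInt.toZMod hm_mod hmod hun)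

theorem setOf_isOfFinOrder_padic_two : {ζ : ℚ_[2] | IsOfFinOrder ζ} = {1, -1} := by
  ext ζ
  constructor
  · intro hζ
    obtain ⟨ζ, rfl⟩ : ∃ z : ℤ_[2], (z : ℚ_[2]) = ζ := ⟨⟨ζ, hζ.norm_eq_one.le⟩, rfl⟩
    have hint : IsOfFinOrder ζ :=
      (Function.Injective.isOfFinOrder_iff (f := (PadicInt.Coe.ringHom (p := 2)).toMonoidHom)
        Subtype.coe_injective).mp hζ
    rcases eq_one_or_eq_neg_one_of_isOfFinOrder_padicInt_two hint with rfl | rfl <;> simp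
  · rintro (rfl | rfl)
    · exact IsOfFinOrder.one
    · exact isOfFinOrder_iff_pow_eq_one.mpr ⟨2, two_pos, neg_one_sq⟩

theorem twoadic_root_count_explicit_sigma_one_example_general {K : Type*} [Field K]
    (a b e m : ℕ) (c₁ d₁ c₂ : K) (f : Polynomial K)
    (hfdef : f = C c₂ * X ^ a * (C c₁ * X ^ b + C d₁ * X ^ e) ^ m) (hf : f ≠ 0) :
    {x : K | f.eval x = 0}.encard ≤ {ζ : K | IsOfFinOrder ζ}.encard + 1 := by
  obtain ⟨hmonomial, hpow⟩ := mul_ne_zero_iff.mp (hfdef ▸ hf)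
  have hc₂ : c₂ ≠ 0 := C_ne_zero.mp (left_ne_zero_of_mul hmonomial)
  have hroot : ∀ x : K, x ≠ 0 → f.eval x = 0 →
      m ≠ 0 ∧ IsRoot (C c₁ * X ^ b + C d₁ * X ^ e) x := fun x hx h ↦ by
    rw [hfdef, eval_mul, eval_pow] at h
    have hmonomial_x : eval x (C c₂ * X ^ a) ≠ 0 := by simp [hc₂, hx]
    exact (pow_eq_zero_iff'.mp ((mul_eq_zero.mp h).resolve_left hmonomial_x)).symm
  refine encard_le_encard_add_one_of_div_mem fun x hfx y hfy hx hy ↦ ?_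
  obtain ⟨hm, hgx⟩ := hroot x hx hfx
  exact isOfFinOrder_div_of_isRoot_binomial ((pow_ne_zero_iff hm).mp hpow) hx hy hgx
    (hroot y hy hfy).2

theorem twoadic_root_count_explicit_sigma_one_example
    (a b e : ℕ) (m : ℕ) (hm : 1 ≤ m) (c₁ d₁ c₂ : ℚ_[2])
    (f : Polynomial ℚ_[2])
    (hfdef : f = C c₂ * X ^ a * (C c₁ * X ^ b + C d₁ * X ^ e) ^ m)
    (hf : f ≠ 0) :
    {x : ℚ_[2] | f.eval x = 0}.ncard ≤ 3 := by
  have hcount :=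
    twoadic_root_count_explicit_sigma_one_example_general a b e m c₁ d₁ c₂ f hfdef hf
  rw [setOf_isOfFinOrder_padic_two, Set.encard_pair (by norm_num)] at hcount
  exact_mod_cast (Set.ncard_le_encard _).trans hcount
end

section
/- Let L be a field of characteristic zero and let f ∈ ℤ[x] be computed by a straight-line program of length N, i.e., there is a sequence (f_0, …, f_N) in ℤ[x] with f_0 = 1, f_1 = x, f_N = f, and each f_i (2 ≤ i ≤ N) a sum, difference, or product of two earlier terms. Then f, viewed as a polynomial over L, admits an additive-complexity-s presentation over L for some s ≤ N; in particular σ_L(f) ≤ τ(f). -/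
open Polynomial

/-- `g 0, g 1, …, g N` is a straight-line program: `g 0 = 1`, `g 1 = x`, and each
subsequent term is a sum, difference, or product of two earlier terms. -/
def IsSLP (g : ℕ → Polynomial ℤ) (N : ℕ) : Prop :=
  g 0 = 1 ∧ g 1 = X ∧
  ∀ i, 2 ≤ i → i ≤ N → ∃ j k, j < i ∧ k < i ∧
    (g i = g j + g k ∨ g i = g j - g k ∨ g i = g j * g k)

/-- `τ(f)`: the least `N - 1` such that some straight-line program
`(g 0, …, g N)` computes `f`, i.e. `g N = f`. -/
noncomputable def tau (f : Polynomial ℤ) : ℕ :=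
  sInf {t | ∃ g : ℕ → Polynomial ℤ, IsSLP g (t + 1) ∧ g (t + 1) = f}

/-- `f` admits a presentation of additive complexity `s` over `L`. -/
def HasAddComplexityPres {L : Type*} [Field L] (f : L[X]) (s : ℕ) : Prop :=
  ∃ (c d : ℕ → L) (m m' : ℕ → ℕ → ℕ) (Xs : ℕ → L[X]),
    Xs 0 = X ∧
    (∀ j, 1 ≤ j → j ≤ s →
      Xs j = C (c j) * ∏ i ∈ Finset.range j, Xs i ^ m i j
           + C (d j) * ∏ i ∈ Finset.range j, Xs i ^ m' i j) ∧
    f = C (c (s+1)) * ∏ i ∈ Finset.range (s+1), Xs i ^ m i (s+1)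

/-- The additive complexity `σ_L(f)`: the least `s` admitting such a presentation. -/
noncomputable def addComplexity {L : Type*} [Field L] (f : L[X]) : ℕ :=
  sInf {s | HasAddComplexityPres f s}

/-! The term `f₀ = 1` is absorbed into the coefficients, so the remaining terms
`f₁ = x, f₂, …, f_N` serve as `X₀, …, X_{N-1}`: a sum or difference of two of them is a binomial
with coefficients `1, ±1`, and a product is a single monomial. This gives `s = N - 1`; the truncated
value at `N = 0` is the right one, the computed polynomial then being the constant `1`. -/

theorem exists_prod_pow_eq {M : Type*} [CommMonoid M] {x : ℕ → M} (h0 : x 0 = 1) {a n : ℕ}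
    (ha : a ≤ n) : ∃ e : ℕ → ℕ, ∏ i ∈ Finset.range n, x (i + 1) ^ e i = x a := by
  cases a with
  | zero => exact ⟨0, by simp [h0]⟩
  | succ b => exact ⟨fun i ↦ if i = b then 1 else 0, by simp [pow_ite, Nat.lt_of_succ_le ha]⟩

theorem exists_binomial_eq_of_add_or_sub_or_mul {R : Type*} [CommRing R] {x : ℕ → R[X]}
    (h0 : x 0 = 1) {a b n : ℕ} (ha : a ≤ n) (hb : b ≤ n) {p : R[X]}
    (hp : p = x a + x b ∨ p = x a - x b ∨ p = x a * x b) :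
    ∃ (c d : R) (m m' : ℕ → ℕ), p = C c * ∏ i ∈ Finset.range n, x (i + 1) ^ m i
      + C d * ∏ i ∈ Finset.range n, x (i + 1) ^ m' i := by
  obtain ⟨u, hu⟩ := exists_prod_pow_eq h0 ha
  obtain ⟨v, hv⟩ := exists_prod_pow_eq h0 hb
  rcases hp with hadd | hsub | hmul
  · exact ⟨1, 1, u, v, by simp [hu, hv, hadd]⟩
  · exact ⟨1, -1, u, v, by simp [hu, hv, hsub, sub_eq_add_neg]⟩
  · exact ⟨1, 0, u + v, 0, by simp [pow_add, Finset.prod_mul_distrib, hu, hv, hmul]⟩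

theorem HasAddComplexityPres.of_forall_exists {L : Type*} [Field L] {f : L[X]} {s : ℕ}
    {x : ℕ → L[X]} (h0 : x 0 = X)
    (hstep : ∀ j, 1 ≤ j → j ≤ s → ∃ (c d : L) (m m' : ℕ → ℕ),
      x j = C c * ∏ i ∈ Finset.range j, x i ^ m i + C d * ∏ i ∈ Finset.range j, x i ^ m' i)
    (hout : ∃ (c : L) (m : ℕ → ℕ), f = C c * ∏ i ∈ Finset.range (s + 1), x i ^ m i) :
    HasAddComplexityPres f s := by
  choose! c d m m' hx using hstep
  obtain ⟨cOut, mOut, hf⟩ := hout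
  refine ⟨Function.update c (s + 1) cOut, d, fun i j ↦ Function.update m (s + 1) mOut j i,
    fun i j ↦ m' j i, x, h0, fun j hj hjs ↦ ?_, ?_⟩
  · have hne : j ≠ s + 1 := by omega
    simpa only [Function.update_of_ne hne] using hx j hj hjs
  · simpa only [Function.update_self] using hf

namespace IsSLP

variable {g : ℕ → ℤ[X]} {N : ℕ}

theorem hasAddComplexityPres_map (L : Type*) [Field L] (hg : IsSLP g N) :
    HasAddComplexityPres ((g N).map (Int.castRingHom L)) (N - 1) := by
  obtain ⟨hg0, hg1, hstep⟩ := hg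
  cases N with
  | zero =>
    exact .of_forall_exists (x := fun _ ↦ X) rfl (fun j hj hj0 ↦ by omega) ⟨1, 0, by simp [hg0]⟩
  | succ s =>
    let y : ℕ → L[X] := fun i ↦ (g i).map (Int.castRingHom L)
    have hy0 : y 0 = 1 := by simp [y, hg0]
    refine .of_forall_exists (x := fun i ↦ y (i + 1)) (by simp [y, hg1]) (fun j hj hjs ↦ ?_) ?_
    · obtain ⟨a, b, ha, hb, hab⟩ := hstep (j + 1) (by omega) (Nat.succ_le_succ hjs)
      have hy : y (j + 1) = y a + y b ∨ y (j + 1) = y a - y b ∨ y (j + 1) = y a * y b := by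
        rcases hab with h | h | h <;> simp [y, h]
      exact exists_binomial_eq_of_add_or_sub_or_mul hy0 (Nat.le_of_lt_succ ha)
        (Nat.le_of_lt_succ hb) hy
    · obtain ⟨m, hm⟩ := exists_prod_pow_eq hy0 (le_refl (s + 1))
      exact ⟨1, m, by simp [hm, y]⟩

theorem update_one_X (N : ℕ) : IsSLP (Function.update 1 1 X) N := by
  refine ⟨by simp, by simp, fun i hi _ ↦ ⟨0, 0, by omega, by omega, .inr (.inr ?_)⟩⟩
  have hne : i ≠ 1 := by omega
  simp [hne]

-- `tau` ignores programs of length `0`, so their value `1` is recomputed as `1 * 1`.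
theorem exists_length_tau_add_one (hg : IsSLP g N) :
    ∃ g' : ℕ → ℤ[X], IsSLP g' (tau (g N) + 1) ∧ g' (tau (g N) + 1) = g N := by
  refine Nat.sInf_mem (s := {t | ∃ g' : ℕ → ℤ[X], IsSLP g' (t + 1) ∧ g' (t + 1) = g N}) ?_
  cases N with
  | zero => exact ⟨1, _, update_one_X 2, by simp [hg.1]⟩
  | succ t => exact ⟨t, g, hg, rfl⟩

end IsSLP

theorem addComplexity_le_tau_general (L : Type*) [Field L] (f : ℤ[X]) (N : ℕ) (g : ℕ → ℤ[X])
    (hslp : IsSLP g N) (hgN : g N = f) :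
    HasAddComplexityPres (f.map (Int.castRingHom L)) (N - 1) ∧
    addComplexity (f.map (Int.castRingHom L)) ≤ tau f := by
  subst hgN
  obtain ⟨g', hg', hvalue⟩ := hslp.exists_length_tau_add_one
  have hpres := hg'.hasAddComplexityPres_map L
  rw [hvalue] at hpres
  exact ⟨hslp.hasAddComplexityPres_map L, Nat.sInf_le hpres⟩

theorem addComplexity_le_tau
    (L : Type*) [Field L] [CharZero L]
    (f : Polynomial ℤ) (N : ℕ) (g : ℕ → Polynomial ℤ)
    (hslp : IsSLP g N) (hgN : g N = f) :
    (∃ s ≤ N, HasAddComplexityPres (f.map (Int.castRingHom L)) s) ∧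
    addComplexity (f.map (Int.castRingHom L)) ≤ tau f := by
  obtain ⟨hpres, hle⟩ := addComplexity_le_tau_general L f N g hslp hgN
  exact ⟨⟨N - 1, Nat.sub_le N 1, hpres⟩, hle⟩
end
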